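/- Let d ≥ 1 and let μ, ν, ν̃ ∈ P₂(ℝ^d). If μ* is a backward projection of μ onto the convex order cone below ν, and μ** is a backward projection of μ onto the convex order cone below ν̃, then W₂²(μ*, μ**) ≤ (W₂(μ,ν) + W₂(μ,ν̃))·W₂(ν, ν̃). -/

import Mathlib

/-!
The cone `C(ν)` of measures below `ν` in convex order is convex in the following sense: if
the random vectors `Z` and `U` have laws in `C(ν)`, so has `(1 - t) Z + t U` (`lipOrder_combo`). Backward projections thus
behave like projections onto convex sets of a Hilbert space. The other ingredient is that `C(ν)` and
`C(ν')` are at Hausdorff distance at most `W₂(ν, ν')` (`exists_map_below`).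

Realize `μ`, `μs`, `μss` by random vectors `X`, `Z`, `Z'` on one space, with `(X, Z)` and `(X, Z')`
nearly optimal (`exists_gluing`). Choose `U` with law below `ν` and `U'` with law below `ν'` such that
`‖U - Z'‖` and `‖U' - Z‖` nearly do not exceed `W₂(ν, ν')`. Comparing `μs` with the law of
`Z + ε (U - Z)` gives `⟨X - Z, U - Z⟩ ≤ O(ε)`, and similarly `⟨X - Z', U' - Z'⟩ ≤ O(ε)`. Therefore
`‖Z - Z'‖² = ⟨X - Z, Z' - U⟩ + ⟨X - Z, U - Z⟩ + ⟨X - Z', Z - U'⟩ + ⟨X - Z', U' - Z'⟩`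
is at most `(‖X - Z‖ + ‖X - Z'‖) W₂(ν, ν') + O(ε)`. Let `ε → 0` and use `W₂(μs, μ) ≤ W₂(μ, ν)` and
`W₂(μss, μ) ≤ W₂(μ, ν')`.

For `exists_map_below`, Strassen's theorem would transport a martingale coupling along a coupling of
`ν` and `ν'`. A finite version replaces it: for a finite partition into cells, Hahn-Banach separation
(`moments_mem_closure`, `exists_weights`) matches the pieces of a measure below `ν` with pieces of `ν`
of the same masses and nearly the same barycentres. Each piece of `ν` is then moved by the coupling,
and Jensen's inequality bounds the displacement of its barycentre.
-/

open MeasureTheory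

noncomputable section

variable {V : Type*} [NormedAddCommGroup V] [NormedSpace ℝ V]
  [MeasurableSpace V] [BorelSpace V]

/-- `π` is a coupling of `μ` and `ν`. -/
def IsCoupling (π : Measure (V × V)) (μ ν : Measure V) : Prop :=
  IsProbabilityMeasure π ∧ π.map Prod.fst = μ ∧ π.map Prod.snd = ν

/-- Squared 2-Wasserstein distance, as infimum of quadratic cost over couplings. -/
def W2sq (μ ν : Measure V) : ℝ :=
  sInf {c : ℝ | ∃ π : Measure (V × V), IsCoupling π μ ν ∧ c = ∫ p, ‖p.1 - p.2‖ ^ 2 ∂π}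

/-- The 2-Wasserstein distance. -/
def W2 (μ ν : Measure V) : ℝ := Real.sqrt (W2sq μ ν)

/-- `μ` is a Borel probability measure with finite second moment. -/
def IsP2 (μ : Measure V) : Prop :=
  IsProbabilityMeasure μ ∧ Integrable (fun x => ‖x‖ ^ 2) μ

/-- Convex order: `∫ φ dμ ≤ ∫ φ dν` for every convex `φ` for which both integrals exist. -/
def ConvexOrder (μ ν : Measure V) : Prop :=
  ∀ φ : V → ℝ, ConvexOn ℝ Set.univ φ → Integrable φ μ → Integrable φ ν →
    ∫ x, φ x ∂μ ≤ ∫ x, φ x ∂ν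

/-- `X` is a Borel map, square-integrable w.r.t. `ρ₀`. -/
def MemL2 (ρ₀ : Measure V) (X : V → V) : Prop :=
  Measurable X ∧ Integrable (fun x => ‖X x‖ ^ 2) ρ₀

/-- `μs` is a backward projection of `μ` onto the convex order cone below `ν`. -/
def IsBackwardProj (ν μ μs : Measure V) : Prop :=
  IsP2 μs ∧ ConvexOrder μs ν ∧
    ∀ ρ : Measure V, IsP2 ρ → ConvexOrder ρ ν → W2 μs μ ≤ W2 ρ μ

/-- `ρs` is a forward projection of `ν` above `μ`. -/
def IsForwardProj (μ ν ρs : Measure V) : Prop :=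
  IsP2 ρs ∧ ConvexOrder μ ρs ∧
    ∀ ρ : Measure V, IsP2 ρ → ConvexOrder μ ρ → W2 ρs ν ≤ W2 ρ ν

/-- `ρs` is a metric extrapolation of `(ν₀, ν₁)` at time `t`. -/
def IsMetricExtrap (t : ℝ) (ν₀ ν₁ ρs : Measure V) : Prop :=
  IsP2 ρs ∧ ∀ ρ : Measure V, IsP2 ρ →
    W2sq ρs ν₁ / (2 * (t - 1)) - W2sq ρs ν₀ / (2 * t) ≤
      W2sq ρ ν₁ / (2 * (t - 1)) - W2sq ρ ν₀ / (2 * t)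

/-- Constant-speed minimizing geodesic on `[a,b]` for `W₂`. -/
def IsGeodesic (a b : ℝ) (γ : ℝ → Measure V) : Prop :=
  (∀ s ∈ Set.Icc a b, IsP2 (γ s)) ∧
    ∀ s₁ ∈ Set.Icc a b, ∀ s₂ ∈ Set.Icc a b,
      W2 (γ s₁) (γ s₂) = |s₁ - s₂| / (b - a) * W2 (γ a) (γ b)

/-- Topological support of a measure. -/
def msupport (μ : Measure V) : Set V := {x | ∀ U ∈ nhds x, μ U ≠ 0}

/-- Regular measures: absolutely continuous, compact convex support,
density bounded above and below on the support. -/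
def IsP2reg {d : ℕ} (μ : Measure (EuclideanSpace ℝ (Fin d))) : Prop :=
  IsP2 μ ∧ μ ≪ volume ∧ IsCompact (msupport μ) ∧ Convex ℝ (msupport μ) ∧
    ∃ m M : ℝ, 0 < m ∧ 0 < M ∧
      ∀ᵐ x ∂(volume : Measure (EuclideanSpace ℝ (Fin d))),
        x ∈ msupport μ → m ≤ (μ.rnDeriv volume x).toReal ∧ (μ.rnDeriv volume x).toReal ≤ M

section Prelim

set_option linter.unusedSectionVars false

variable {E : Type*} [NormedAddCommGroup E] [InnerProductSpace ℝ E] [FiniteDimensional ℝ E]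
  [MeasurableSpace E] [BorelSpace E]
  {Ω : Type*} [MeasurableSpace Ω] {P : Measure Ω}

/-! ### The `L²` seminorm -/

/-- The `L²(P)` seminorm of an `E`-valued map, written as a Bochner integral to match the cost in
`W2sq`. -/
def l2 (P : Measure Ω) (u : Ω → E) : ℝ := Real.sqrt (∫ x, ‖u x‖ ^ 2 ∂P)

theorem memLp_id_of_isP2 {μ : Measure E} (h : IsP2 μ) : MemLp (fun x : E => x) 2 μ :=
  (memLp_two_iff_integrable_sq_norm aestronglyMeasurable_id).2 h.2

theorem isP2_map [IsProbabilityMeasure P] {Z : Ω → E} (hZ : Measurable Z) (hZ2 : MemLp Z 2 P) :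
    IsP2 (P.map Z) := by
  refine ⟨Measure.isProbabilityMeasure_map hZ.aemeasurable, ?_⟩
  rw [integrable_map_measure (by fun_prop) hZ.aemeasurable]
  exact (memLp_two_iff_integrable_sq_norm hZ2.1).1 hZ2

theorem memLp_of_map_isP2 {μ : Measure E} (h : IsP2 μ) {Z : Ω → E} (hZ : Measurable Z)
    (hm : P.map Z = μ) : MemLp Z 2 P := by
  subst hm
  exact (memLp_map_measure_iff aestronglyMeasurable_id hZ.aemeasurable).1 (memLp_id_of_isP2 h)

theorem l2_eq_norm {u : Ω → E} (hu : MemLp u 2 P) : l2 P u = ‖hu.toLp u‖ := by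
  rw [l2, Real.sqrt_eq_iff_eq_sq (integral_nonneg fun _ => sq_nonneg _) (norm_nonneg _),
    ← real_inner_self_eq_norm_sq, L2.inner_def]
  refine integral_congr_ae ?_
  filter_upwards [hu.coeFn_toLp] with x hx
  rw [hx, real_inner_self_eq_norm_sq]

theorem l2_nonneg (u : Ω → E) : 0 ≤ l2 P u := Real.sqrt_nonneg _

theorem l2_sq (u : Ω → E) : l2 P u ^ 2 = ∫ x, ‖u x‖ ^ 2 ∂P :=
  Real.sq_sqrt (integral_nonneg fun _ => sq_nonneg _)

theorem l2_add_le {u v : Ω → E} (hu : MemLp u 2 P) (hv : MemLp v 2 P) :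
    l2 P (fun x => u x + v x) ≤ l2 P u + l2 P v := by
  have h := l2_eq_norm (hu.add hv)
  rw [MemLp.toLp_add hu hv] at h
  rw [l2_eq_norm hu, l2_eq_norm hv]
  exact h.trans_le (norm_add_le _ _)

/-! ### Convex order tested on Lipschitz convex functions -/

/-- The convex order tested only on Lipschitz convex functions. On measures with finite second
moment all the integrals exist, so this order is easier to manipulate than `ConvexOrder`. -/
def LipOrder (μ ν : Measure E) : Prop :=
  ∀ φ : E → ℝ, ConvexOn ℝ Set.univ φ → (∃ K, LipschitzWith K φ) → ∫ x, φ x ∂μ ≤ ∫ x, φ x ∂ν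

theorem integrable_lip_comp [IsFiniteMeasure P] {φ : E → ℝ} (hφ : ∃ K, LipschitzWith K φ)
    {Z : Ω → E} (hZ2 : MemLp Z 2 P) : Integrable (fun x => φ (Z x)) P := by
  obtain ⟨K, hK⟩ := hφ
  have hZ1 : Integrable Z P := hZ2.integrable (by norm_num)
  refine Integrable.mono' ((hZ1.norm.const_mul (K : ℝ)).add (integrable_const |φ 0|))
    (hK.continuous.comp_aestronglyMeasurable hZ2.1) (Filter.Eventually.of_forall fun x => ?_)
  have h := hK.dist_le_mul (Z x) 0
  rw [Real.dist_eq, dist_zero_right] at h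
  have := abs_sub_abs_le_abs_sub (φ (Z x)) (φ 0)
  simp only [Pi.add_apply, Real.norm_eq_abs]
  linarith

theorem integrable_lip {μ : Measure E} (h : IsP2 μ) {φ : E → ℝ} (hφ : ∃ K, LipschitzWith K φ) :
    Integrable φ μ :=
  have := h.1
  integrable_lip_comp hφ (memLp_id_of_isP2 h)

theorem lipOrder_of_convexOrder {μ ν : Measure E} (hμ : IsP2 μ) (hν : IsP2 ν)
    (h : ConvexOrder μ ν) : LipOrder μ ν :=
  fun φ hc hL => h φ hc (integrable_lip hμ hL) (integrable_lip hν hL)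

theorem lipschitz_sup {φ ψ : E → ℝ} (hφ : ∃ K, LipschitzWith K φ) (hψ : ∃ K, LipschitzWith K ψ) :
    ∃ K, LipschitzWith K (φ ⊔ ψ) := by
  obtain ⟨K, hK⟩ := hφ
  obtain ⟨K', hK'⟩ := hψ
  exact ⟨_, hK.max hK'⟩

theorem convexOn_affine (l : E →L[ℝ] ℝ) (c : ℝ) :
    ConvexOn ℝ Set.univ (fun x => l x + c) :=
  (l.toLinearMap.convexOn convex_univ).add_const c

theorem lipschitz_affine (l : E →L[ℝ] ℝ) (c : ℝ) : ∃ K, LipschitzWith K (fun x => l x + c) :=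
  ⟨_, l.lipschitz.add (LipschitzWith.const c)⟩

/-- A convex function on `E` is the increasing limit of maxima of finitely many affine functions,
which are Lipschitz; monotone convergence does the rest. -/
theorem convexOrder_of_lipOrder {μ ν : Measure E} (hμ : IsP2 μ) (hν : IsP2 ν)
    (h : LipOrder μ ν) : ConvexOrder μ ν := by
  intro φ hc hφμ hφν
  have hcont : Continuous φ := by
    simpa [continuousOn_univ] using hc.continuousOn isOpen_univ
  obtain ⟨l, c, hle, hsup⟩ := hc.real_univ_sSup_of_nat_affine_eq hcont.lowerSemicontinuous
  let a : ℕ → E → ℝ := fun i x => l i x + c i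
  have hale : ∀ i, a i ≤ φ := hle
  have hasup : ∀ x, ⨆ i, a i x = φ x := fun x => by
    rw [← hsup, iSup_apply]; rfl
  have hprop : ∀ n, ConvexOn ℝ Set.univ (partialSups a n) ∧
      ∃ K, LipschitzWith K (partialSups a n) := by
    intro n
    induction n with
    | zero => simpa using ⟨convexOn_affine (l 0) (c 0), lipschitz_affine (l 0) (c 0)⟩
    | succ n ih =>
      rw [partialSups_add_one]
      exact ⟨ih.1.sup (convexOn_affine _ _), lipschitz_sup ih.2 (lipschitz_affine _ _)⟩
  have hmono : ∀ x, Monotone fun n => partialSups a n x :=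
    fun x m n hmn => (partialSups a).monotone hmn x
  have hlim : ∀ x, Filter.Tendsto (fun n => partialSups a n x) Filter.atTop (nhds (φ x)) := by
    intro x
    have hb : BddAbove (Set.range fun i => a i x) := ⟨φ x, by rintro _ ⟨i, rfl⟩; exact hale i x⟩
    have e : (fun n => partialSups a n x) = partialSups (fun i => a i x) := by
      ext n; exact Pi.partialSups_apply a n x
    have := tendsto_atTop_ciSup (partialSups fun i => a i x).monotone
      ((bddAbove_range_partialSups).2 hb)
    rw [ciSup_partialSups_eq hb, hasup x] at this
    rw [e]; exact this
  have hI : ∀ {ρ : Measure E}, IsP2 ρ → Integrable φ ρ →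
      Filter.Tendsto (fun n => ∫ x, partialSups a n x ∂ρ) Filter.atTop (nhds (∫ x, φ x ∂ρ)) :=
    fun hρ hφ => integral_tendsto_of_tendsto_of_monotone
      (fun n => integrable_lip hρ (hprop n).2) hφ
      (Filter.Eventually.of_forall hmono) (Filter.Eventually.of_forall hlim)
  exact le_of_tendsto_of_tendsto' (hI hμ hφμ) (hI hν hφν)
    fun n => h _ (hprop n).1 (hprop n).2

/-- The random vectors with law below `ν` form a convex set. -/
theorem lipOrder_combo [IsProbabilityMeasure P] {ν : Measure E} {Z U : Ω → E}
    (hZ : Measurable Z) (hU : Measurable U) (hZ2 : MemLp Z 2 P) (hU2 : MemLp U 2 P)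
    (hZν : LipOrder (P.map Z) ν) (hUν : LipOrder (P.map U) ν) {t : ℝ} (h0 : 0 ≤ t) (h1 : t ≤ 1) :
    LipOrder (P.map fun x => Z x + t • (U x - Z x)) ν := by
  intro φ hc hL
  have hm : AEStronglyMeasurable φ (P.map fun x => Z x + t • (U x - Z x)) :=
    hL.choose_spec.continuous.aestronglyMeasurable
  have hz := hZν φ hc hL
  have hu := hUν φ hc hL
  rw [integral_map (by fun_prop) hL.choose_spec.continuous.aestronglyMeasurable] at hz hu ⊢
  have hiZ := integrable_lip_comp hL hZ2
  have hiU := integrable_lip_comp hL hU2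
  calc ∫ x, φ (Z x + t • (U x - Z x)) ∂P
      ≤ ∫ x, ((1 - t) * φ (Z x) + t * φ (U x)) ∂P := by
        refine integral_mono (integrable_lip_comp hL (hZ2.add ((hU2.sub hZ2).const_smul t)))
          ((hiZ.const_mul _).add (hiU.const_mul _)) fun x => ?_
        have := hc.2 (Set.mem_univ (Z x)) (Set.mem_univ (U x)) (sub_nonneg.2 h1) h0 (by ring)
        simp only [smul_eq_mul] at this
        refine le_trans (le_of_eq ?_) this
        congr 1
        module
    _ = (1 - t) * ∫ x, φ (Z x) ∂P + t * ∫ x, φ (U x) ∂P := by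
        rw [integral_add (hiZ.const_mul _) (hiU.const_mul _), integral_const_mul,
          integral_const_mul]
    _ ≤ (1 - t) * ∫ x, φ x ∂ν + t * ∫ x, φ x ∂ν := by
        gcongr
    _ = ∫ x, φ x ∂ν := by ring

/-! ### Splitting a dominated measure along weights -/

/-- A measurable partition of unity indexed by `ι`, understood `μ`-almost everywhere. -/
structure IsWeights {ι : Type*} [Fintype ι] (μ : Measure E) (q : ι → E → ℝ) : Prop where
  meas : ∀ i, Measurable (q i)
  nonneg : ∀ i y, 0 ≤ q i y
  le_one : ∀ i y, q i y ≤ 1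
  sum_eq : ∀ᵐ y ∂μ, ∑ i, q i y = 1

/-- Bounded weights preserve integrability. -/
theorem integrable_weight_smul {F : Type*} [NormedAddCommGroup F] [NormedSpace ℝ F]
    {w : Ω → ℝ} (hw : Measurable w) (h0 : ∀ x, 0 ≤ w x) (h1 : ∀ x, w x ≤ 1) {u : Ω → F}
    (hu : Integrable u P) : Integrable (fun x => w x • u x) P := by
  refine Integrable.mono hu (hw.aestronglyMeasurable.smul hu.1)
    (Filter.Eventually.of_forall fun x => ?_)
  rw [norm_smul, Real.norm_of_nonneg (h0 x)]
  exact mul_le_of_le_one_left (norm_nonneg _) (h1 x)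

theorem IsP2.integrable_id {μ : Measure E} (h : IsP2 μ) : Integrable (fun x : E => x) μ :=
  have := h.1
  (memLp_id_of_isP2 h).integrable (by norm_num)

section Weights

variable {ι : Type*} [Fintype ι]

/-- The masses and first moments of the pieces `q i • μ`. -/
def moments (μ : Measure E) (q : ι → E → ℝ) : ι → ℝ × E :=
  fun i => (∫ y, q i y ∂μ, ∫ y, q i y • y ∂μ)

theorem IsWeights.integrable {μ : Measure E} [IsFiniteMeasure μ] {q : ι → E → ℝ}
    (hq : IsWeights μ q) (i : ι) : Integrable (q i) μ := by
  simpa using integrable_weight_smul (hq.meas i) (hq.nonneg i) (hq.le_one i)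
    (integrable_const (1 : ℝ))

theorem IsWeights.integrable_smul {μ : Measure E} (h : IsP2 μ) {q : ι → E → ℝ}
    (hq : IsWeights μ q) (i : ι) : Integrable (fun y => q i y • y) μ :=
  integrable_weight_smul (hq.meas i) (hq.nonneg i) (hq.le_one i) h.integrable_id

theorem IsWeights.combo {μ : Measure E} {q q' : ι → E → ℝ}
    (hq : IsWeights μ q) (hq' : IsWeights μ q') {a b : ℝ} (ha : 0 ≤ a) (hb : 0 ≤ b)
    (hab : a + b = 1) : IsWeights μ fun i y => a * q i y + b * q' i y where
  meas i := ((hq.meas i).const_mul a).add ((hq'.meas i).const_mul b)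
  nonneg i y := add_nonneg (mul_nonneg ha (hq.nonneg i y)) (mul_nonneg hb (hq'.nonneg i y))
  le_one i y := by nlinarith [hq.le_one i y, hq'.le_one i y]
  sum_eq := by
    filter_upwards [hq.sum_eq, hq'.sum_eq] with y h h'
    rw [Finset.sum_add_distrib, ← Finset.mul_sum, ← Finset.mul_sum, h, h', mul_one, mul_one, hab]

theorem moments_combo {μ : Measure E} (h : IsP2 μ) {q q' : ι → E → ℝ}
    (hq : IsWeights μ q) (hq' : IsWeights μ q') (a b : ℝ) :
    moments μ (fun i y => a * q i y + b * q' i y) = a • moments μ q + b • moments μ q' := by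
  have := h.1
  ext i : 1
  refine Prod.ext ?_ ?_
  · simp only [moments, Pi.add_apply, Pi.smul_apply, Prod.fst_add, Prod.smul_fst, smul_eq_mul]
    rw [integral_add ((hq.integrable i).const_mul a) ((hq'.integrable i).const_mul b),
      integral_const_mul, integral_const_mul]
  · simp only [moments, Pi.add_apply, Pi.smul_apply, Prod.snd_add, Prod.smul_snd, add_smul,
      mul_smul]
    rw [← integral_smul, ← integral_smul]
    exact integral_add ((hq.integrable_smul h i).smul a) ((hq'.integrable_smul h i).smul b)

theorem apply_moments [DecidableEq ι] {μ : Measure E} (h : IsP2 μ) {q : ι → E → ℝ}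
    (hq : IsWeights μ q) (f : (ι → ℝ × E) →L[ℝ] ℝ) :
    f (moments μ q) = ∫ y, ∑ i, q i y * f (Pi.single i (1, y)) ∂μ := by
  have := h.1
  let β : ι → E →L[ℝ] ℝ := fun i =>
    f.comp ((ContinuousLinearMap.single ℝ (fun _ : ι => ℝ × E) i).comp
      (ContinuousLinearMap.inr ℝ ℝ E))
  let α : ι → ℝ := fun i => f (Pi.single i (1, 0))
  have hf : ∀ i (m : ℝ) (b : E), f (Pi.single i (m, b)) = m * α i + β i b := by
    intro i m b
    have : (Pi.single i (m, b) : ι → ℝ × E) =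
        m • (Pi.single i (1, 0) : ι → ℝ × E) + (Pi.single i (0, b) : ι → ℝ × E) := by
      rw [← Pi.single_smul, ← Pi.single_add]; simp
    rw [this, map_add, map_smul]; rfl
  have hi : ∀ i, Integrable (fun y => q i y * f (Pi.single i (1, y))) μ := by
    intro i
    simp only [hf, mul_add, one_mul]
    refine ((hq.integrable i).mul_const _).add ?_
    exact integrable_weight_smul (hq.meas i) (hq.nonneg i) (hq.le_one i)
      ((β i).integrable_comp h.integrable_id)
  rw [integral_finsetSum _ fun i _ => hi i]
  conv_lhs => rw [← Finset.univ_sum_single (moments μ q), map_sum]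
  refine Finset.sum_congr rfl fun i _ => ?_
  have e : (fun y => q i y * f (Pi.single i (1, y))) =
      fun y => q i y * α i + β i (q i y • y) := by
    ext y; rw [hf, map_smul, smul_eq_mul]; ring
  rw [e, integral_add ((hq.integrable i).mul_const _)
    ((β i).integrable_comp (hq.integrable_smul h i)), integral_mul_const,
    (β i).integral_comp_comm (hq.integrable_smul h i)]
  exact hf i _ _

/-- A finite form of Strassen's theorem, up to closure: if `ρ` lies below `ν`, any splitting of `ρ`
into finitely many pieces is matched, in masses and first moments, by splittings of `ν`. A
separating functional would give affine functions `h i` with `∫ max_i h i ∂ν < ∫ max_i h i ∂ρ`. -/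
theorem moments_mem_closure [Nonempty ι] {ρ ν : Measure E} (hρ : IsP2 ρ) (hν : IsP2 ν)
    (h : LipOrder ρ ν) {r : ι → E → ℝ} (hr : IsWeights ρ r) :
    moments ρ r ∈ closure {v | ∃ q : ι → E → ℝ, IsWeights ν q ∧ v = moments ν q} := by
  classical
  by_contra hnot
  have hconv : Convex ℝ {v | ∃ q : ι → E → ℝ, IsWeights ν q ∧ v = moments ν q} := by
    rintro _ ⟨q, hq, rfl⟩ _ ⟨q', hq', rfl⟩ a b ha hb hab
    exact ⟨_, hq.combo hq' ha hb hab, (moments_combo hν hq hq' a b).symm⟩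
  obtain ⟨f, c, hfc, hcf⟩ := geometric_hahn_banach_closed_point hconv.closure isClosed_closure hnot
  let η : ι → E → ℝ := fun i y => f (Pi.single i (1, y))
  let β : ι → E →L[ℝ] ℝ := fun i =>
    f.comp ((ContinuousLinearMap.single ℝ (fun _ : ι => ℝ × E) i).comp
      (ContinuousLinearMap.inr ℝ ℝ E))
  have hη : ∀ i, η i = fun y => β i y + f (Pi.single i (1, 0)) := by
    intro i; ext y
    have : (Pi.single i (1, y) : ι → ℝ × E) =
        (Pi.single i (0, y) : ι → ℝ × E) + (Pi.single i (1, 0) : ι → ℝ × E) := by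
      rw [← Pi.single_add]; simp
    simp only [η, this, map_add]; rfl
  let φ : E → ℝ := Finset.univ.sup' Finset.univ_nonempty η
  have hφ : ConvexOn ℝ Set.univ φ ∧ ∃ K, LipschitzWith K φ := by
    refine Finset.sup'_induction Finset.univ_nonempty η
      (p := fun φ => ConvexOn ℝ Set.univ φ ∧ ∃ K, LipschitzWith K φ) ?_ ?_
    · intro a ha b hb
      exact ⟨ha.1.sup hb.1, lipschitz_sup ha.2 hb.2⟩
    · intro i _
      rw [hη]
      exact ⟨convexOn_affine _ _, lipschitz_affine _ _⟩
  have hle : ∀ i y, η i y ≤ φ y := fun i y =>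
    (Finset.le_sup' η (Finset.mem_univ i) : η i ≤ φ) y
  have hex : ∀ y, ∃ i, η i y = φ y := by
    intro y
    obtain ⟨i, -, hi⟩ := Finset.exists_mem_eq_sup' Finset.univ_nonempty fun i => η i y
    refine ⟨i, ?_⟩
    rw [← hi]
    exact (Finset.sup'_apply Finset.univ_nonempty η y).symm
  have hηm : ∀ i, Measurable (η i) := by
    intro i; rw [hη]; fun_prop
  have hφm : Measurable φ := hφ.2.choose_spec.continuous.measurable
  -- Distribute each point evenly over the indices at which the maximum is attained.
  let o : ι → E → ℝ := fun i => Set.indicator {y | η i y = φ y} 1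
  let q : ι → E → ℝ := fun i y => o i y / ∑ j, o j y
  have ho0 : ∀ i y, 0 ≤ o i y := fun i y => Set.indicator_nonneg (fun _ _ => zero_le_one) y
  have hopos : ∀ y, 0 < ∑ j, o j y := by
    intro y
    obtain ⟨i, hi⟩ := hex y
    refine Finset.sum_pos' (fun j _ => ho0 j y) ⟨i, Finset.mem_univ i, ?_⟩
    simp [o, hi]
  have hom : ∀ i, Measurable (o i) := fun i =>
    measurable_one.indicator (measurableSet_eq_fun (hηm i) hφm)
  have hsum : ∀ y, ∑ i, q i y = 1 := fun y => by
    simp only [q]; rw [← Finset.sum_div, div_self (hopos y).ne']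
  have hq0 : ∀ i y, 0 ≤ q i y := fun i y => div_nonneg (ho0 i y) (hopos y).le
  have hq : IsWeights ν q :=
    { meas := fun i => (hom i).div (Finset.measurable_sum _ fun j _ => hom j)
      nonneg := hq0
      le_one := fun i y => by
        rw [← hsum y]
        exact Finset.single_le_sum (f := fun i => q i y) (fun j _ => hq0 j y) (Finset.mem_univ i)
      sum_eq := Filter.Eventually.of_forall hsum }
  have h1 := hfc _ (subset_closure ⟨q, hq, rfl⟩)
  rw [apply_moments hν hq] at h1
  rw [apply_moments hρ hr] at hcf
  have e1 : ∫ y, ∑ i, q i y * f (Pi.single i (1, y)) ∂ν = ∫ y, φ y ∂ν := by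
    refine integral_congr_ae (Filter.Eventually.of_forall fun y => ?_)
    have : ∀ i, q i y * f (Pi.single i (1, y)) = q i y * φ y := by
      intro i
      by_cases hi : η i y = φ y
      · rw [← hi]
      · have : o i y = 0 := by simp [o, hi]
        simp [q, this]
    simp only [this]
    rw [← Finset.sum_mul, hsum, one_mul]
  have e2 : ∫ y, ∑ i, r i y * f (Pi.single i (1, y)) ∂ρ ≤ ∫ y, φ y ∂ρ := by
    have hi : ∀ i, Integrable (fun y => r i y * f (Pi.single i (1, y))) ρ := by
      intro i
      have hη' : ∃ K, LipschitzWith K (η i) := by rw [hη]; exact lipschitz_affine _ _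
      exact integrable_weight_smul (hr.meas i) (hr.nonneg i) (hr.le_one i) (integrable_lip hρ hη')
    refine integral_mono_ae (integrable_finsetSum _ fun i _ => hi i) (integrable_lip hρ hφ.2) ?_
    filter_upwards [hr.sum_eq] with y hy
    calc ∑ i, r i y * f (Pi.single i (1, y)) ≤ ∑ i, r i y * φ y :=
          Finset.sum_le_sum fun i _ => mul_le_mul_of_nonneg_left (hle i y) (hr.nonneg i y)
      _ = φ y := by rw [← Finset.sum_mul, hy, one_mul]
  have := h φ hφ.1 hφ.2
  linarith

/-- Pieces with prescribed positive masses and approximately prescribed first moments: mixing in a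
small constant weight repairs the masses left inexact by `moments_mem_closure`. -/
theorem exists_weights [Nonempty ι] {ρ ν : Measure E} (hρ : IsP2 ρ) (hν : IsP2 ν)
    (h : LipOrder ρ ν) {r : ι → E → ℝ} (hr : IsWeights ρ r) (hpos : ∀ i, 0 < ∫ y, r i y ∂ρ)
    {η : ℝ} (hη : 0 < η) :
    ∃ q : ι → E → ℝ, IsWeights ν q ∧ (∀ i, ∫ y, q i y ∂ν = ∫ y, r i y ∂ρ) ∧
      ∀ i, ‖∫ y, q i y • y ∂ν - ∫ y, r i y • y ∂ρ‖ ≤ η := by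
  have := hρ.1
  have := hν.1
  obtain ⟨i₀, hi₀⟩ := Finite.exists_min fun i => ∫ y, r i y ∂ρ
  set pm := ∫ y, r i₀ y ∂ρ with hpm
  have hpm0 : 0 < pm := hpos i₀
  set B : ℝ := ‖∫ y, y ∂ν‖ + ∑ i, ‖∫ y, r i y • y ∂ρ‖ with hB
  have hB0 : 0 ≤ B := by positivity
  set s : ℝ := min (1 / 2) (η / (2 * (B + 1))) with hs
  have hs0 : 0 < s := by positivity
  have hs1 : s ≤ 1 / 2 := min_le_left _ _
  have hsB : s * B ≤ η / 2 := by
    have : s * (2 * (B + 1)) ≤ η := (le_div_iff₀ (by positivity)).1 (min_le_right _ _)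
    nlinarith
  obtain ⟨_, ⟨q, hq, rfl⟩, hd⟩ := Metric.mem_closure_iff.1 (moments_mem_closure hρ hν h hr)
    (min (η / 2) (s * pm)) (by positivity)
  have hdi : ∀ i, |∫ y, r i y ∂ρ - ∫ y, q i y ∂ν| < min (η / 2) (s * pm) ∧
      ‖∫ y, r i y • y ∂ρ - ∫ y, q i y • y ∂ν‖ < min (η / 2) (s * pm) := by
    intro i
    have := (dist_le_pi_dist _ _ i).trans_lt hd
    rw [Prod.dist_eq, max_lt_iff, Real.dist_eq, dist_eq_norm] at this
    exact this
  have hsumr : ∑ i, ∫ y, r i y ∂ρ = 1 := by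
    rw [← integral_finsetSum _ fun i _ => hr.integrable i, integral_congr_ae hr.sum_eq]; simp
  have hsumq : ∑ i, ∫ y, q i y ∂ν = 1 := by
    rw [← integral_finsetSum _ fun i _ => hq.integrable i, integral_congr_ae hq.sum_eq]; simp
  -- `c` is chosen so that `(1 - s) * ∫ q i + s * c i = ∫ r i`; it is nonnegative because the error
  -- in the masses is at most `s * pm`.
  let c : ι → ℝ := fun i =>
    ∫ y, r i y ∂ρ + (∫ y, r i y ∂ρ - ∫ y, q i y ∂ν) * ((1 - s) / s)
  have hc0 : ∀ i, 0 ≤ c i := by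
    intro i
    have h1 : -(s * pm) ≤ ∫ y, r i y ∂ρ - ∫ y, q i y ∂ν :=
      (abs_le.1 ((hdi i).1.le.trans (min_le_right _ _))).1
    have h2 : -(s * pm) * ((1 - s) / s) ≤ (∫ y, r i y ∂ρ - ∫ y, q i y ∂ν) * ((1 - s) / s) :=
      mul_le_mul_of_nonneg_right h1 (div_nonneg (by linarith) hs0.le)
    have h3 : -(s * pm) * ((1 - s) / s) = -pm + s * pm := by field_simp; ring
    have h4 : pm ≤ ∫ y, r i y ∂ρ := hi₀ i
    have : 0 < s * pm := by positivity
    simp only [c]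
    linarith
  have hcs : ∑ i, c i = 1 := by
    simp only [c]
    rw [Finset.sum_add_distrib, ← Finset.sum_mul, Finset.sum_sub_distrib, hsumr, hsumq]; simp
  have hc1 : ∀ i, c i ≤ 1 := fun i => by
    rw [← hcs]; exact Finset.single_le_sum (fun j _ => hc0 j) (Finset.mem_univ i)
  have hcw : IsWeights ν fun i (_ : E) => c i :=
    { meas := fun i => measurable_const
      nonneg := fun i _ => hc0 i
      le_one := fun i _ => hc1 i
      sum_eq := Filter.Eventually.of_forall fun _ => hcs }
  have hmom := moments_combo hν hq hcw (1 - s) s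
  refine ⟨_, hq.combo hcw (a := 1 - s) (b := s) (by linarith) hs0.le (by ring), fun i => ?_, fun i => ?_⟩
  · have := congrArg Prod.fst (congrFun hmom i)
    simp only [moments, Pi.add_apply, Pi.smul_apply, Prod.fst_add, Prod.smul_fst, smul_eq_mul,
      integral_const, probReal_univ, one_mul] at this
    rw [this]
    simp only [c]
    field_simp
    ring
  · have := congrArg Prod.snd (congrFun hmom i)
    simp only [moments, Pi.add_apply, Pi.smul_apply, Prod.snd_add, Prod.smul_snd] at this
    have hci : ∫ y : E, c i • y ∂ν = c i • ∫ y, y ∂ν := integral_smul _ _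
    rw [this, hci]
    set b := ∫ y, r i y • y ∂ρ with hb
    set b' := ∫ y, q i y • y ∂ν with hb'
    set M := ∫ y, y ∂ν with hM
    have e : (1 - s) • b' + s • c i • M - b = (1 - s) • (b' - b) + s • (c i • M - b) := by module
    have h1 : ‖b' - b‖ ≤ η / 2 := by
      rw [norm_sub_rev]; exact (hdi i).2.le.trans (min_le_left _ _)
    have h2 : ‖c i • M - b‖ ≤ B := by
      refine (norm_sub_le _ _).trans (add_le_add ?_ ?_)
      · rw [norm_smul, Real.norm_of_nonneg (hc0 i)]
        exact mul_le_of_le_one_left (norm_nonneg _) (hc1 i)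
      · exact Finset.single_le_sum (f := fun i => ‖∫ y, r i y • y ∂ρ‖)
          (fun j _ => norm_nonneg _) (Finset.mem_univ i)
    rw [e]
    calc ‖(1 - s) • (b' - b) + s • (c i • M - b)‖
        ≤ (1 - s) * ‖b' - b‖ + s * ‖c i • M - b‖ := by
          refine (norm_add_le _ _).trans_eq ?_
          rw [norm_smul, norm_smul, Real.norm_of_nonneg hs0.le, Real.norm_of_nonneg (by linarith)]
      _ ≤ 1 * (η / 2) + s * B := by
          gcongr
          linarith
      _ ≤ η := by linarith

end Weights

/-- Jensen's inequality for the squared norm under a weight `w` of total mass `p`. -/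
theorem mass_mul_sq_le [IsFiniteMeasure P] {w : Ω → ℝ} (hw : Measurable w) (h0 : ∀ x, 0 ≤ w x)
    (h1 : ∀ x, w x ≤ 1) {u : Ω → E} (hu : MemLp u 2 P) {p : ℝ} (hp : ∫ x, w x ∂P = p)
    (hp0 : 0 < p) :
    p * ‖p⁻¹ • ∫ x, w x • u x ∂P‖ ^ 2 ≤ ∫ x, w x * ‖u x‖ ^ 2 ∂P := by
  set c := p⁻¹ • ∫ x, w x • u x ∂P with hc
  have hu1 : Integrable u P := hu.integrable (by norm_num)
  have hwi : Integrable w P := by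
    simpa using integrable_weight_smul hw h0 h1 (integrable_const (1 : ℝ) (μ := P))
  have hwu : Integrable (fun x => w x • u x) P := integrable_weight_smul hw h0 h1 hu1
  have hsq : Integrable (fun x => w x * ‖u x‖ ^ 2) P := integrable_weight_smul hw h0 h1
    ((memLp_two_iff_integrable_sq_norm hu.1).1 hu)
  have hpc : ∫ x, w x • u x ∂P = p • c := by
    rw [hc, smul_smul, mul_inv_cancel₀ hp0.ne', one_smul]
  have hin : Integrable (fun x => inner ℝ c (w x • u x)) P := hwu.const_inner c
  calc p * ‖c‖ ^ 2 = ∫ x, (2 * inner ℝ c (w x • u x) - w x * ‖c‖ ^ 2) ∂P := by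
        rw [integral_sub (hin.const_mul 2) (hwi.mul_const _), integral_const_mul,
          integral_inner hwu, hpc, integral_mul_const, hp, inner_smul_right,
          real_inner_self_eq_norm_sq]
        ring
    _ ≤ ∫ x, w x * ‖u x‖ ^ 2 ∂P := by
        refine integral_mono ((hin.const_mul 2).sub (hwi.mul_const _)) hsq fun x => ?_
        have := sq_nonneg ‖u x - c‖
        rw [norm_sub_sq_real, real_inner_comm] at this
        simp only [inner_smul_right]
        nlinarith [mul_nonneg (h0 x) this]

/-- Jensen's inequality for a Lipschitz convex function under a weight `w` of total mass `p`. -/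
theorem mass_mul_convex_le [IsFiniteMeasure P] {w : Ω → ℝ} (hw : Measurable w)
    (h0 : ∀ x, 0 ≤ w x) (h1 : ∀ x, w x ≤ 1) {u : Ω → E} (hu : MemLp u 2 P) {p : ℝ}
    (hp : ∫ x, w x ∂P = p) (hp0 : 0 < p) {φ : E → ℝ} (hc : ConvexOn ℝ Set.univ φ)
    (hL : ∃ K, LipschitzWith K φ) :
    p * φ (p⁻¹ • ∫ x, w x • u x ∂P) ≤ ∫ x, w x * φ (u x) ∂P := by
  set c := p⁻¹ • ∫ x, w x • u x ∂P with hcdef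
  have hu1 : Integrable u P := hu.integrable (by norm_num)
  have hwi : Integrable w P := by
    simpa using integrable_weight_smul hw h0 h1 (integrable_const (1 : ℝ) (μ := P))
  have hwu : Integrable (fun x => w x • u x) P := integrable_weight_smul hw h0 h1 hu1
  have hpc : ∫ x, w x • u x ∂P = p • c := by
    rw [hcdef, smul_smul, mul_inv_cancel₀ hp0.ne', one_smul]
  -- It suffices to test affine minorants of `φ` that nearly touch it at `c`.
  rw [← le_div_iff₀' hp0]
  refine le_of_forall_lt fun a ha => ?_
  obtain ⟨b, hab, hb⟩ := exists_between ha
  obtain ⟨l, k, hle, heq⟩ := hc.exists_affine_le_of_lt (𝕜 := ℝ) (Set.mem_univ c) hb isClosed_univ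
    (hL.choose_spec.continuous.lowerSemicontinuous.lowerSemicontinuousOn _)
  refine hab.trans_le ?_
  rw [le_div_iff₀' hp0]
  have hlw : Integrable (fun x => l (w x • u x)) P := l.integrable_comp hwu
  calc p * b = ∫ x, (l (w x • u x) + w x * k) ∂P := by
        rw [integral_add hlw (hwi.mul_const _), l.integral_comp_comm hwu, hpc,
          integral_mul_const, hp, map_smul, ← heq]
        simp; ring
    _ ≤ ∫ x, w x * φ (u x) ∂P := by
        refine integral_mono (hlw.add (hwi.mul_const _))
          (integrable_weight_smul hw h0 h1 (integrable_lip_comp hL hu)) fun x => ?_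
        have : l (u x) + k ≤ φ (u x) := hle ⟨u x, trivial⟩
        simp only [map_smul, smul_eq_mul]
        nlinarith [mul_le_mul_of_nonneg_left this (h0 x)]

theorem sum_integral_weights [IsFiniteMeasure P] {ι : Type*} [Fintype ι] {w : ι → Ω → ℝ}
    (hw : ∀ i, Measurable (w i)) (h0 : ∀ i x, 0 ≤ w i x) (h1 : ∀ i x, w i x ≤ 1)
    (hs : ∀ᵐ x ∂P, ∑ i, w i x = 1) {F : Ω → ℝ} (hF : Integrable F P) :
    ∑ i, ∫ x, w i x * F x ∂P = ∫ x, F x ∂P := by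
  have hi : ∀ i, Integrable (fun x => w i x * F x) P :=
    fun i => integrable_weight_smul (hw i) (h0 i) (h1 i) hF
  rw [← integral_finsetSum _ fun i _ => hi i]
  refine integral_congr_ae ?_
  filter_upwards [hs] with x hx
  rw [← Finset.sum_mul, hx, one_mul]

theorem integrable_sq {u : Ω → E} (hu : MemLp u 2 P) : Integrable (fun x => ‖u x‖ ^ 2) P :=
  (memLp_two_iff_integrable_sq_norm hu.1).1 hu

/-- The cones below `ν` and below `ν'` are at Hausdorff distance at most the cost of any coupling of
`ν` and `ν'`: any `ρ` below `ν` is moved below `ν'` by a map of `L²(ρ)` displacement at most this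
cost, up to `ε`. The map is constant on the cells of a fine partition; each cell goes to the mean of
the second coordinate over a matching piece of the coupling. -/
theorem exists_map_below {ρ ν ν' : Measure E} (hρ : IsP2 ρ) (hν : IsP2 ν) (hν' : IsP2 ν')
    (hord : LipOrder ρ ν) {π : Measure (E × E)} (hπ : IsCoupling π ν ν') {ε : ℝ} (hε : 0 < ε) :
    ∃ g : E → E, Measurable g ∧ MemLp g 2 ρ ∧ LipOrder (ρ.map g) ν' ∧
      l2 ρ (fun x => g x - x) ≤ l2 π (fun p => p.1 - p.2) + ε := by
  classical
  have := hρ.1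
  have := hν.1
  obtain ⟨hπp, hπ1, hπ2⟩ := hπ
  have hid := memLp_id_of_isP2 hρ
  obtain ⟨f, hfε, hf2⟩ := hid.exists_simpleFunc_eLpNorm_sub_lt (by norm_num)
    (ε := ENNReal.ofReal (ε / 3)) (by simpa using hε)
  have hfid : l2 ρ (fun x => f x - x) ≤ ε / 3 := by
    have hm : MemLp (fun x => f x - x) 2 ρ := hf2.sub hid
    rw [l2_eq_norm hm, Lp.norm_toLp]
    refine ENNReal.toReal_le_of_le_ofReal (by positivity) ?_
    refine le_trans (le_of_eq ?_) hfε.le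
    rw [← eLpNorm_neg]
    congr 1
    ext x
    simp
  let S : Finset E := f.range.filter fun v => ρ (f ⁻¹' {v}) ≠ 0
  have hfS : ∀ᵐ z ∂ρ, f z ∈ S := by
    have : ∀ᵐ z ∂ρ, ∀ v ∈ f.range, f z = v → v ∈ S := by
      refine (Finset.eventually_all f.range).2 fun v hv => ?_
      by_cases hvS : v ∈ S
      · exact Filter.Eventually.of_forall fun _ _ => hvS
      · have h0 : ρ (f ⁻¹' {v}) = 0 := by
          by_contra h0
          exact hvS (Finset.mem_filter.2 ⟨hv, h0⟩)
        filter_upwards [measure_eq_zero_iff_ae_notMem.1 h0] with z hz hfz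
        exact absurd hfz hz
    filter_upwards [this] with z hz
    exact hz _ (f.mem_range_self z) rfl
  let r : S → E → ℝ := fun v => Set.indicator (f ⁻¹' {v.1}) 1
  have hrm : ∀ v, Measurable (r v) := fun v => measurable_one.indicator (f.measurableSet_fiber _)
  have hr0 : ∀ v z, 0 ≤ r v z := fun v z => Set.indicator_nonneg (fun _ _ => zero_le_one) z
  have hr1 : ∀ v z, r v z ≤ 1 := fun v z =>
    Set.indicator_le_self' (fun _ _ => zero_le_one) z
  have hpick : ∀ z (hz : f z ∈ S) (ψ : E → ℝ), ∑ v, r v z * ψ v = ψ (f z) := by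
    intro z hz ψ
    rw [Finset.sum_eq_single ⟨f z, hz⟩]
    · simp [r]
    · intro v _ hv
      have : f z ≠ v := fun h => hv (Subtype.ext h.symm)
      simp [r, this]
    · simp
  have hr : IsWeights ρ r := by
    refine ⟨hrm, hr0, hr1, ?_⟩
    filter_upwards [hfS] with z hz
    simpa using hpick z hz fun _ => 1
  let p : S → ℝ := fun v => ∫ z, r v z ∂ρ
  have hp : ∀ v, 0 < p v := by
    intro v
    simp only [p, r, integral_indicator_one (f.measurableSet_fiber _)]
    exact ENNReal.toReal_pos (Finset.mem_filter.1 v.2).2 (measure_ne_top _ _)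
  have hint : ∀ ψ : E → ℝ, ∫ z, ψ (f z) ∂ρ = ∑ v, p v * ψ v := by
    intro ψ
    simp only [p, ← integral_mul_const]
    rw [← integral_finsetSum _ fun v _ => (hr.integrable v).mul_const _]
    refine integral_congr_ae ?_
    filter_upwards [hfS] with z hz
    exact (hpick z hz ψ).symm
  have hps : ∑ v, p v = 1 := by
    simpa using (hint fun _ => 1).symm
  have : Nonempty S := by
    by_contra hne
    rw [not_nonempty_iff] at hne
    simp at hps
  obtain ⟨v₀, hv₀⟩ := Finite.exists_min p
  obtain ⟨q, hq, hqp, hqb⟩ := exists_weights hρ hν hord hr hp (η := ε / 3 * p v₀)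
    (mul_pos (by positivity) (hp v₀))
  -- Images of the cells: cell means, means of the pieces of `ν`, and means of the transported pieces.
  let zb : S → E := fun v => (p v)⁻¹ • ∫ z, r v z • z ∂ρ
  let zh : S → E := fun v => (p v)⁻¹ • ∫ y, q v y • y ∂ν
  let zt : S → E := fun v => (p v)⁻¹ • ∫ x : E × E, q v x.1 • x.2 ∂π
  let ex : (S → E) → E → E := fun u v => if h : v ∈ S then u ⟨v, h⟩ else 0
  have hex : ∀ u (v : S), ex u v = u v := fun u v => by simp [ex]
  have hexm : ∀ u, Measurable fun z => ex u (f z) := fun u => (f.map (ex u)).measurable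
  have hex2 : ∀ u, MemLp (fun z => ex u (f z)) 2 ρ := fun u =>
    (f.map (ex u)).memLp_of_isFiniteMeasure 2 ρ
  have hl2 : ∀ u u', l2 ρ (fun z => ex u (f z) - ex u' (f z)) ^ 2 =
      ∑ v, p v * ‖u v - u' v‖ ^ 2 := by
    intro u u'
    rw [l2_sq, hint fun v => ‖ex u v - ex u' v‖ ^ 2]
    simp only [hex]
  have hfst : MemLp (fun x : E × E => x.1) 2 π := memLp_of_map_isP2 hν measurable_fst hπ1
  have hsnd : MemLp (fun x : E × E => x.2) 2 π := memLp_of_map_isP2 hν' measurable_snd hπ2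
  have hQm : ∀ v, Measurable fun x : E × E => q v x.1 := fun v => (hq.meas v).comp measurable_fst
  have hQ0 : ∀ v (x : E × E), 0 ≤ q v x.1 := fun v x => hq.nonneg v x.1
  have hQ1 : ∀ v (x : E × E), q v x.1 ≤ 1 := fun v x => hq.le_one v x.1
  have hQs : ∀ᵐ x : E × E ∂π, ∑ v, q v x.1 = 1 := by
    have := hq.sum_eq
    rw [← hπ1] at this
    exact ae_of_ae_map measurable_fst.aemeasurable this
  have hQp : ∀ v, ∫ x : E × E, q v x.1 ∂π = p v := by
    intro v
    have h : ∫ y, q v y ∂(π.map Prod.fst) = p v := by rw [hπ1]; exact hqp v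
    rwa [integral_map measurable_fst.aemeasurable (hq.meas v).aestronglyMeasurable] at h
  have hfst1 : Integrable (fun x : E × E => x.1) π := hfst.integrable (by norm_num)
  have hsnd1 : Integrable (fun x : E × E => x.2) π := hsnd.integrable (by norm_num)
  have hzh : ∀ v, zh v = (p v)⁻¹ • ∫ x : E × E, q v x.1 • x.1 ∂π := by
    intro v
    simp only [zh]
    have hm : Measurable fun y => q v y • y := (hq.meas v).smul measurable_id
    rw [← hπ1, integral_map measurable_fst.aemeasurable hm.aestronglyMeasurable]
  refine ⟨fun z => ex zt (f z), hexm zt, hex2 zt, ?_, ?_⟩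
  · intro φ hc hL
    have hφ := hL.choose_spec.continuous
    rw [integral_map (hexm zt).aemeasurable hφ.aestronglyMeasurable,
      hint fun v => φ (ex zt v), ← hπ2, integral_map measurable_snd.aemeasurable
      hφ.aestronglyMeasurable, ← sum_integral_weights hQm hQ0 hQ1 hQs (integrable_lip_comp hL hsnd)]
    refine Finset.sum_le_sum fun v _ => ?_
    rw [hex]
    exact mass_mul_convex_le (hQm v) (hQ0 v) (hQ1 v) hsnd (hQp v) (hp v) hc hL
  · have hd : MemLp (fun x : E × E => x.1 - x.2) 2 π := hfst.sub hsnd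
    have b1 : l2 ρ (fun z => ex zt (f z) - ex zh (f z)) ≤ l2 π (fun x => x.1 - x.2) := by
      rw [← sq_le_sq₀ (l2_nonneg _) (l2_nonneg _), hl2, l2_sq,
        ← sum_integral_weights hQm hQ0 hQ1 hQs (integrable_sq hd)]
      refine Finset.sum_le_sum fun v _ => ?_
      refine le_trans (le_of_eq ?_) (mass_mul_sq_le (hQm v) (hQ0 v) (hQ1 v) hd (hQp v) (hp v))
      have e : ∫ x : E × E, q v x.1 • (x.1 - x.2) ∂π =
          ∫ x : E × E, q v x.1 • x.1 ∂π - ∫ x : E × E, q v x.1 • x.2 ∂π := by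
        simp only [smul_sub]
        exact integral_sub (integrable_weight_smul (hQm v) (hQ0 v) (hQ1 v) hfst1)
          (integrable_weight_smul (hQm v) (hQ0 v) (hQ1 v) hsnd1)
      rw [e, smul_sub, ← hzh, norm_sub_rev]
    have b2 : l2 ρ (fun z => ex zh (f z) - ex zb (f z)) ≤ ε / 3 := by
      rw [← sq_le_sq₀ (l2_nonneg _) (by positivity), hl2]
      have hv : ∀ v, ‖zh v - zb v‖ ≤ ε / 3 := by
        intro v
        simp only [zh, zb, ← smul_sub]
        rw [norm_smul, norm_inv, Real.norm_of_nonneg (hp v).le, inv_mul_le_iff₀ (hp v), mul_comm]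
        exact (hqb v).trans (mul_le_mul_of_nonneg_left (hv₀ v) (by positivity))
      calc ∑ v, p v * ‖zh v - zb v‖ ^ 2 ≤ ∑ v, p v * (ε / 3) ^ 2 := by
            gcongr with v
            · exact (hp v).le
            · exact hv v
        _ = (ε / 3) ^ 2 := by rw [← Finset.sum_mul, hps, one_mul]
    have hfi : MemLp (fun z => f z - z) 2 ρ := hf2.sub hid
    have hf1 : Integrable (fun z => f z) ρ := hf2.integrable (by norm_num)
    have b3 : l2 ρ (fun z => ex zb (f z) - f z) ≤ ε / 3 := by
      refine le_trans ?_ hfid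
      rw [← sq_le_sq₀ (l2_nonneg _) (l2_nonneg _), l2_sq, l2_sq, hint fun v => ‖ex zb v - v‖ ^ 2,
        ← sum_integral_weights hrm hr0 hr1 hr.sum_eq (integrable_sq hfi)]
      refine Finset.sum_le_sum fun v _ => ?_
      refine le_trans (le_of_eq ?_) (mass_mul_sq_le (hrm v) (hr0 v) (hr1 v) hfi rfl (hp v))
      have e : ∫ z, r v z • (f z - z) ∂ρ = p v • (v : E) - ∫ z, r v z • z ∂ρ := by
        simp only [p]
        rw [← integral_smul_const, ← integral_sub ((hr.integrable v).smul_const _)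
          (hr.integrable_smul hρ v)]
        refine integral_congr_ae (Filter.Eventually.of_forall fun z => ?_)
        simp only [smul_sub]
        congr 1
        by_cases hz : f z = v
        · rw [hz]
        · simp [r, hz]
      have e2 : ∫ z, r v z ∂ρ = p v := rfl
      rw [e2, e, smul_sub, smul_smul, inv_mul_cancel₀ (hp v).ne', one_smul, hex, norm_sub_rev]
    have t1 := l2_add_le ((hex2 zt).sub (hex2 zh)) ((hex2 zh).sub (hex2 zb))
    have t2 := l2_add_le ((hex2 zt).sub (hex2 zb)) ((hex2 zb).sub hf2)
    have t3 := l2_add_le ((hex2 zt).sub hf2) hfi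
    simp only [Pi.sub_apply, sub_add_sub_cancel] at t1 t2 t3
    have t1' : l2 ρ (fun z => ex zt (f z) - ex zb (f z)) ≤
      l2 ρ (fun z => ex zt (f z) - ex zh (f z)) + l2 ρ (fun z => ex zh (f z) - ex zb (f z)) := t1
    have t2' : l2 ρ (fun z => ex zt (f z) - f z) ≤
      l2 ρ (fun z => ex zt (f z) - ex zb (f z)) + l2 ρ (fun z => ex zb (f z) - f z) := t2
    have t3' : l2 ρ (fun z => ex zt (f z) - z) ≤
      l2 ρ (fun z => ex zt (f z) - f z) + l2 ρ (fun z => f z - z) := t3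
    linarith

/-! ### Couplings and the Wasserstein distance -/

theorem W2_le_l2 [IsProbabilityMeasure P] {Y Z : Ω → E} (hY : Measurable Y) (hZ : Measurable Z) :
    W2 (P.map Y) (P.map Z) ≤ l2 P (fun x => Y x - Z x) := by
  refine Real.sqrt_le_sqrt (csInf_le ⟨0, ?_⟩ ⟨P.map fun x => (Y x, Z x), ⟨?_, ?_, ?_⟩, ?_⟩)
  · rintro _ ⟨π, -, rfl⟩
    exact integral_nonneg fun _ => sq_nonneg _
  · exact Measure.isProbabilityMeasure_map (by fun_prop)
  · rw [Measure.map_map (by fun_prop) (by fun_prop)]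
    rfl
  · rw [Measure.map_map (by fun_prop) (by fun_prop)]
    rfl
  · rw [integral_map (by fun_prop) (by fun_prop)]

theorem W2_nonneg (μ ν : Measure E) : 0 ≤ W2 μ ν := Real.sqrt_nonneg _

theorem exists_coupling {μ ν : Measure E} (hμ : IsP2 μ) (hν : IsP2 ν) {ε : ℝ} (hε : 0 < ε) :
    ∃ π, IsCoupling π μ ν ∧ l2 π (fun p => p.1 - p.2) ^ 2 ≤ W2 μ ν ^ 2 + ε ^ 2 := by
  have := hμ.1
  have := hν.1
  have hne : {c : ℝ | ∃ π : Measure (E × E), IsCoupling π μ ν ∧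
      c = ∫ p, ‖p.1 - p.2‖ ^ 2 ∂π}.Nonempty :=
    ⟨_, μ.prod ν, ⟨inferInstance, by simp, by simp⟩, rfl⟩
  have h0 : 0 ≤ W2sq μ ν := by
    refine le_csInf hne ?_
    rintro _ ⟨π, -, rfl⟩
    exact integral_nonneg fun _ => sq_nonneg _
  obtain ⟨_, ⟨π, hπ, rfl⟩, hlt⟩ := Real.lt_sInf_add_pos hne (pow_pos hε 2)
  refine ⟨π, hπ, ?_⟩
  rw [l2_sq, W2, Real.sq_sqrt h0]
  exact hlt.le

theorem le_add_of_sq_le {s a ε : ℝ} (ha : 0 ≤ a) (hε : 0 ≤ ε) (h : s ^ 2 ≤ a ^ 2 + ε ^ 2) :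
    s ≤ a + ε :=
  le_of_sq_le_sq (by nlinarith [mul_nonneg ha hε]) (by positivity)

theorem W2_comm_le {μ ν : Measure E} (hμ : IsP2 μ) (hν : IsP2 ν) : W2 ν μ ≤ W2 μ ν := by
  refine le_of_forall_pos_le_add fun ε hε => ?_
  obtain ⟨π, ⟨hp, h1, h2⟩, h⟩ := exists_coupling hμ hν hε
  have := W2_le_l2 (P := π) measurable_snd measurable_fst
  rw [h1, h2] at this
  refine this.trans (le_trans (le_of_eq ?_) (le_add_of_sq_le (W2_nonneg _ _) hε.le h))
  simp only [l2, norm_sub_rev]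

theorem W2_comm {μ ν : Measure E} (hμ : IsP2 μ) (hν : IsP2 ν) : W2 μ ν = W2 ν μ :=
  le_antisymm (W2_comm_le hν hμ) (W2_comm_le hμ hν)

/-- Two couplings with the same first marginal are the marginals of a law on triples, under which
the second and third coordinates are conditionally independent given the first. -/
theorem exists_gluing {μ ν₁ ν₂ : Measure E} {π₁ π₂ : Measure (E × E)}
    (h₁ : IsCoupling π₁ μ ν₁) (h₂ : IsCoupling π₂ μ ν₂) :
    ∃ P : Measure (E × E × E), IsProbabilityMeasure P ∧
      P.map (fun x => (x.1, x.2.1)) = π₁ ∧ P.map (fun x => (x.1, x.2.2)) = π₂ := by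
  have hp₁ := h₁.1
  have hp₂ := h₂.1
  have hμ : IsProbabilityMeasure μ := by
    rw [← h₁.2.1]
    exact Measure.isProbabilityMeasure_map measurable_fst.aemeasurable
  have e₁ : μ.compProd π₁.condKernel = π₁ := by
    conv_rhs => rw [← π₁.disintegrate π₁.condKernel]
    rw [Measure.fst, h₁.2.1]
  have e₂ : μ.compProd π₂.condKernel = π₂ := by
    conv_rhs => rw [← π₂.disintegrate π₂.condKernel]
    rw [Measure.fst, h₂.2.1]
  refine ⟨μ.compProd (π₁.condKernel.prod π₂.condKernel), inferInstance, ?_, ?_⟩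
  · have := Measure.compProd_map (μ := μ) (κ := π₁.condKernel.prod π₂.condKernel)
      (f := Prod.fst) measurable_fst
    rw [← ProbabilityTheory.Kernel.fst_eq, ProbabilityTheory.Kernel.fst_prod, e₁] at this
    exact this.symm
  · have := Measure.compProd_map (μ := μ) (κ := π₁.condKernel.prod π₂.condKernel)
      (f := Prod.snd) measurable_snd
    rw [← ProbabilityTheory.Kernel.snd_eq, ProbabilityTheory.Kernel.snd_prod, e₂] at this
    exact this.symm

/-! ### The Hilbert space estimate -/

/-- First-order optimality: if moving from `z` a fraction `ε` of the way to `u` does not bring it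
closer to `x` than `a`, and `z` itself is almost at distance `a`, then `u - z` makes almost an obtuse
angle with `x - z`. -/
theorem inner_le_of_competitor {H : Type*} [NormedAddCommGroup H] [InnerProductSpace ℝ H]
    {x z u : H} {a ε M : ℝ} (ha : 0 ≤ a) (hε : 0 < ε) (hz : ‖x - z‖ ^ 2 ≤ a ^ 2 + ε ^ 2)
    (hc : a ≤ ‖x - (z + ε • (u - z))‖) (hM : ‖u - z‖ ≤ M) :
    2 * inner ℝ (x - z) (u - z) ≤ ε * (1 + M ^ 2) := by
  have h : a ^ 2 ≤ ‖x - z‖ ^ 2 - 2 * (ε * inner ℝ (x - z) (u - z)) + ε ^ 2 * ‖u - z‖ ^ 2 := by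
    calc a ^ 2 ≤ ‖x - (z + ε • (u - z))‖ ^ 2 := by gcongr
      _ = _ := by
        rw [← sub_sub, norm_sub_sq_real, inner_smul_right, norm_smul, mul_pow, Real.norm_eq_abs,
          sq_abs]
  have h2 : ‖u - z‖ ^ 2 ≤ M ^ 2 := by gcongr
  have h3 : ε ^ 2 * ‖u - z‖ ^ 2 ≤ ε ^ 2 * M ^ 2 := by gcongr
  refine le_of_mul_le_mul_left ?_ hε
  nlinarith

/-- If `z` and `z'` almost project `x` onto convex sets containing `u` near `z'` and `u'` near `z`,
then `z` and `z'` are close. -/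
theorem norm_sub_sq_le_of_competitors {H : Type*} [NormedAddCommGroup H] [InnerProductSpace ℝ H]
    {x z z' u u' : H} {a a' w ε : ℝ} (ha : 0 ≤ a) (ha' : 0 ≤ a') (hε : 0 < ε) (hε1 : ε ≤ 1)
    (hz : ‖x - z‖ ^ 2 ≤ a ^ 2 + ε ^ 2) (hz' : ‖x - z'‖ ^ 2 ≤ a' ^ 2 + ε ^ 2)
    (hu : ‖u - z'‖ ≤ w + ε) (hu' : ‖u' - z‖ ≤ w + ε)
    (hc : a ≤ ‖x - (z + ε • (u - z))‖) (hc' : a' ≤ ‖x - (z' + ε • (u' - z'))‖) :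
    ‖z - z'‖ ^ 2 ≤ (a + a' + 2 * ε) * (w + ε) + ε * (1 + (a + a' + w + 3) ^ 2) := by
  have hz1 := le_add_of_sq_le ha hε.le hz
  have hz1' := le_add_of_sq_le ha' hε.le hz'
  have hM : ‖u - z‖ ≤ a + a' + w + 3 := by
    have e : u - z = (u - z') - (x - z') + (x - z) := by abel
    rw [e]
    linarith [norm_add_le ((u - z') - (x - z')) (x - z), norm_sub_le (u - z') (x - z')]
  have hM' : ‖u' - z'‖ ≤ a + a' + w + 3 := by
    have e : u' - z' = (u' - z) - (x - z) + (x - z') := by abel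
    rw [e]
    linarith [norm_add_le ((u' - z) - (x - z)) (x - z'), norm_sub_le (u' - z) (x - z)]
  have i := inner_le_of_competitor ha hε hz hc hM
  have i' := inner_le_of_competitor ha' hε hz' hc' hM'
  have j : inner ℝ (x - z) (z' - u) ≤ (a + ε) * (w + ε) := by
    refine (real_inner_le_norm _ _).trans ?_
    rw [norm_sub_rev z' u]
    gcongr
  have j' : inner ℝ (x - z') (z - u') ≤ (a' + ε) * (w + ε) := by
    refine (real_inner_le_norm _ _).trans ?_
    rw [norm_sub_rev z u']
    gcongr
  have key : ‖z - z'‖ ^ 2 = inner ℝ (x - z) (z' - u) + inner ℝ (x - z) (u - z) +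
      (inner ℝ (x - z') (z - u') + inner ℝ (x - z') (u' - z')) := by
    rw [← inner_add_right, ← inner_add_right, sub_add_sub_cancel, sub_add_sub_cancel,
      ← neg_sub z z', inner_neg_right, neg_add_eq_sub, ← inner_sub_left,
      ← real_inner_self_eq_norm_sq]
    congr 1
    abel
  rw [key]
  nlinarith

/-! ### Stability of the backward projection -/

/-- A backward projection is at least as close to `μ` as any random vector obtained by moving part of
the way from one with law the projection towards one with law below `ν`. -/
theorem W2_le_competitor [IsProbabilityMeasure P] {μ ν μs : Measure E} (hν : IsP2 ν)
    (h : IsBackwardProj ν μ μs) {X Z U : Ω → E} (hX : Measurable X) (hZ : Measurable Z)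
    (hU : Measurable U) (hXμ : P.map X = μ) (hZμ : P.map Z = μs) (hU2 : MemLp U 2 P)
    (hUν : LipOrder (P.map U) ν) {ε : ℝ} (h0 : 0 ≤ ε) (h1 : ε ≤ 1) :
    W2 μs μ ≤ l2 P (fun x => X x - (Z x + ε • (U x - Z x))) := by
  have hZ2 := memLp_of_map_isP2 h.1 hZ hZμ
  have hZν : LipOrder (P.map Z) ν := by
    rw [hZμ]
    exact lipOrder_of_convexOrder h.1 hν h.2.1
  have hm : Measurable fun x => Z x + ε • (U x - Z x) := by fun_prop
  have h2 : MemLp (fun x => Z x + ε • (U x - Z x)) 2 P := hZ2.add ((hU2.sub hZ2).const_smul ε)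
  have hP2 := isP2_map hm h2
  refine (h.2.2 _ hP2 (convexOrder_of_lipOrder hP2 hν
    (lipOrder_combo hZ hU hZ2 hU2 hZν hUν h0 h1))).trans ?_
  rw [← hXμ]
  refine (W2_le_l2 hm hX).trans (le_of_eq ?_)
  simp only [l2, norm_sub_rev]

/-- The stability bound with an error vanishing with `ε`, obtained by applying
`norm_sub_sq_le_of_competitors` in `L²` to near-optimal couplings glued along `μ`. -/
theorem backwardProj_stability_aux {μ ν ν' μs μss : Measure E} (hμ : IsP2 μ) (hν : IsP2 ν)
    (hν' : IsP2 ν') (hμs : IsBackwardProj ν μ μs) (hμss : IsBackwardProj ν' μ μss)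
    {ε : ℝ} (hε : 0 < ε) (hε1 : ε ≤ 1) :
    W2 μs μss ^ 2 ≤ (W2 μs μ + W2 μss μ + 2 * ε) * (W2 ν ν' + ε) +
      ε * (1 + (W2 μs μ + W2 μss μ + W2 ν ν' + 3) ^ 2) := by
  obtain ⟨π₁, hπ₁, c₁⟩ := exists_coupling hμ hμs.1 hε
  obtain ⟨π₂, hπ₂, c₂⟩ := exists_coupling hμ hμss.1 hε
  rw [W2_comm hμ hμs.1] at c₁
  rw [W2_comm hμ hμss.1] at c₂
  obtain ⟨P, hP, m₁, m₂⟩ := exists_gluing hπ₁ hπ₂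
  let X : E × E × E → E := fun x => x.1
  let Z : E × E × E → E := fun x => x.2.1
  let Z' : E × E × E → E := fun x => x.2.2
  have hX : Measurable X := measurable_fst
  have hZ : Measurable Z := measurable_fst.comp measurable_snd
  have hZ' : Measurable Z' := measurable_snd.comp measurable_snd
  have lX : P.map X = μ := by
    rw [← hπ₁.2.1, ← m₁, Measure.map_map (by fun_prop) (by fun_prop)]
    rfl
  have lZ : P.map Z = μs := by
    rw [← hπ₁.2.2, ← m₁, Measure.map_map (by fun_prop) (by fun_prop)]
    rfl
  have lZ' : P.map Z' = μss := by
    rw [← hπ₂.2.2, ← m₂, Measure.map_map (by fun_prop) (by fun_prop)]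
    rfl
  have d₁ : l2 P (fun x => X x - Z x) ^ 2 ≤ W2 μs μ ^ 2 + ε ^ 2 := by
    refine le_trans (le_of_eq ?_) c₁
    rw [l2_sq, l2_sq, ← m₁, integral_map (by fun_prop) (by fun_prop)]
  have d₂ : l2 P (fun x => X x - Z' x) ^ 2 ≤ W2 μss μ ^ 2 + ε ^ 2 := by
    refine le_trans (le_of_eq ?_) c₂
    rw [l2_sq, l2_sq, ← m₂, integral_map (by fun_prop) (by fun_prop)]
  -- Half of `ε` pays for the near-optimal coupling and half for the discretization.
  have move : ∀ {ρ ν₁ ν₂ : Measure E}, IsP2 ρ → IsP2 ν₁ → IsP2 ν₂ → ConvexOrder ρ ν₁ →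
      ∀ {Y : E × E × E → E}, Measurable Y → P.map Y = ρ →
      ∃ U : E × E × E → E, Measurable U ∧ MemLp U 2 P ∧ LipOrder (P.map U) ν₂ ∧
        l2 P (fun x => U x - Y x) ≤ W2 ν₁ ν₂ + ε := by
    intro ρ ν₁ ν₂ hρ h₁ h₂ hord Y hY lY
    obtain ⟨π, hπ, c⟩ := exists_coupling h₁ h₂ (half_pos hε)
    obtain ⟨g, hg, hg2, hgo, hgl⟩ := exists_map_below hρ h₁ h₂
      (lipOrder_of_convexOrder hρ h₁ hord) hπ (half_pos hε)
    refine ⟨fun x => g (Y x), hg.comp hY, ?_, ?_, ?_⟩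
    · rw [← lY] at hg2
      exact (memLp_map_measure_iff hg.aestronglyMeasurable hY.aemeasurable).1 hg2
    · rwa [← lY, Measure.map_map hg hY] at hgo
    · have e : l2 P (fun x => g (Y x) - Y x) = l2 ρ (fun y => g y - y) := by
        have hm : Measurable fun y => ‖g y - y‖ ^ 2 := by fun_prop
        rw [l2, l2, ← lY, integral_map hY.aemeasurable hm.aestronglyMeasurable]
      have := le_add_of_sq_le (W2_nonneg _ _) (half_pos hε).le c
      linarith
  obtain ⟨U, hU, hU2, hUo, hUl⟩ := move hμss.1 hν' hν hμss.2.1 hZ' lZ'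
  obtain ⟨U', hU', hU2', hUo', hUl'⟩ := move hμs.1 hν hν' hμs.2.1 hZ lZ
  rw [W2_comm hν' hν] at hUl
  have k := W2_le_competitor hν hμs hX hZ hU lX lZ hU2 hUo hε.le hε1
  have k₂ := W2_le_competitor hν' hμss hX hZ' hU' lX lZ' hU2' hUo' hε.le hε1
  have hX2 := memLp_of_map_isP2 hμ hX lX
  have hZ2 := memLp_of_map_isP2 hμs.1 hZ lZ
  have hZ2' := memLp_of_map_isP2 hμss.1 hZ' lZ'
  have hW : W2 μs μss ≤ l2 P (fun x => Z x - Z' x) := by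
    have := W2_le_l2 (P := P) hZ hZ'
    rwa [lZ, lZ'] at this
  have n₁ : l2 P (fun x => X x - Z x) = ‖hX2.toLp X - hZ2.toLp Z‖ := l2_eq_norm (hX2.sub hZ2)
  have n₂ : l2 P (fun x => X x - Z' x) = ‖hX2.toLp X - hZ2'.toLp Z'‖ := l2_eq_norm (hX2.sub hZ2')
  have n₃ : l2 P (fun x => U x - Z' x) = ‖hU2.toLp U - hZ2'.toLp Z'‖ := l2_eq_norm (hU2.sub hZ2')
  have n₄ : l2 P (fun x => U' x - Z x) = ‖hU2'.toLp U' - hZ2.toLp Z‖ := l2_eq_norm (hU2'.sub hZ2)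
  have n₅ : l2 P (fun x => Z x - Z' x) = ‖hZ2.toLp Z - hZ2'.toLp Z'‖ := l2_eq_norm (hZ2.sub hZ2')
  have n₆ : l2 P (fun x => X x - (Z x + ε • (U x - Z x))) =
      ‖hX2.toLp X - (hZ2.toLp Z + ε • (hU2.toLp U - hZ2.toLp Z))‖ :=
    l2_eq_norm (hX2.sub (hZ2.add ((hU2.sub hZ2).const_smul ε)))
  have n₇ : l2 P (fun x => X x - (Z' x + ε • (U' x - Z' x))) =
      ‖hX2.toLp X - (hZ2'.toLp Z' + ε • (hU2'.toLp U' - hZ2'.toLp Z'))‖ :=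
    l2_eq_norm (hX2.sub (hZ2'.add ((hU2'.sub hZ2').const_smul ε)))
  refine (pow_le_pow_left₀ (W2_nonneg _ _) (hW.trans_eq n₅) 2).trans ?_
  exact norm_sub_sq_le_of_competitors (W2_nonneg _ _) (W2_nonneg _ _) hε hε1
    (n₁ ▸ d₁) (n₂ ▸ d₂) (n₃ ▸ hUl) (n₄ ▸ hUl') (n₆ ▸ k) (n₇ ▸ k₂)

/-- The measure `ν` is itself a competitor for the projection. -/
theorem W2_backwardProj_le {μ ν μs : Measure E} (hμ : IsP2 μ) (hν : IsP2 ν)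
    (h : IsBackwardProj ν μ μs) : W2 μs μ ≤ W2 μ ν :=
  (h.2.2 ν hν fun _ _ _ _ => le_rfl).trans (W2_comm_le hμ hν)

theorem backwardProj_stability {μ ν ν' μs μss : Measure E} (hμ : IsP2 μ) (hν : IsP2 ν)
    (hν' : IsP2 ν') (hμs : IsBackwardProj ν μ μs) (hμss : IsBackwardProj ν' μ μss) :
    W2 μs μss ^ 2 ≤ (W2 μ ν + W2 μ ν') * W2 ν ν' := by
  have hlim : W2 μs μss ^ 2 ≤ (W2 μs μ + W2 μss μ) * W2 ν ν' := by
    let F : ℝ → ℝ := fun ε => (W2 μs μ + W2 μss μ + 2 * ε) * (W2 ν ν' + ε) +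
      ε * (1 + (W2 μs μ + W2 μss μ + W2 ν ν' + 3) ^ 2)
    have hF : Filter.Tendsto F (nhdsWithin 0 (Set.Ioi 0))
        (nhds ((W2 μs μ + W2 μss μ) * W2 ν ν')) := by
      have hc : Continuous F := by fun_prop
      have := hc.tendsto 0
      simp only [F, mul_zero, add_zero, zero_mul] at this
      exact this.mono_left nhdsWithin_le_nhds
    refine ge_of_tendsto hF ?_
    filter_upwards [Ioc_mem_nhdsGT (zero_lt_one' ℝ)] with ε hε
    exact backwardProj_stability_aux hμ hν hν' hμs hμss hε.1 hε.2
  refine hlim.trans (mul_le_mul_of_nonneg_right ?_ (W2_nonneg _ _))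
  exact add_le_add (W2_backwardProj_le hμ hν hμs) (W2_backwardProj_le hμ hν' hμss)

end Prelim

/-- 1/2-Hölder stability of the backward projection in `ν`. -/
theorem stmt10 {d : ℕ} (hd : 1 ≤ d)
    (μ ν ν' μs μss : Measure (EuclideanSpace ℝ (Fin d)))
    (hμ : IsP2 μ) (hν : IsP2 ν) (hν' : IsP2 ν')
    (hμs : IsBackwardProj ν μ μs) (hμss : IsBackwardProj ν' μ μss) :
    W2 μs μss ^ 2 ≤ (W2 μ ν + W2 μ ν') * W2 ν ν' := by
  exact backwardProj_stability hμ hν hν' hμs hμss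

end
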